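/- arXiv:2305.06722 — 2 statements merged into one kernel-verified Lean document; each statement's English description precedes it below -/
import Mathlib

section
/- For every s > 0 there exists C > 0 such that the following holds. Let u : ℝ³ → ℂ be differentiable with ∇u ∈ L²(ℝ³) and ‖u‖_{L²} = 1, and let α : ℝ³ → ℂ satisfy ∫_{ℝ³} ω(k)^{2s}|α(k)|² dk < ∞. Define F_α(x) = 2 Re ∫_{ℝ³} k B₀(k) e^{ik·x} α(k) dk ∈ ℝ³ and g_{u,α}(k) = 2 k B₀(k) · ∫_{ℝ³} e^{−ik·x} F_α(x) |u(x)|² dx. Then sup_{k∈ℝ³} |g_{u,α}(k)| ≤ C ‖u‖_{H¹} ‖α‖_{h_s} and ∫_{ℝ³} ω(k)|g_{u,α}(k)|² dk ≤ C ‖u‖_{H¹}² ‖α‖_{h_s}². -/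
open MeasureTheory
open scoped ENNReal

noncomputable section

/-- The dispersion relation `ω(k) = √(1+|k|²)` of the massive scalar field. -/
def ω (k : EuclideanSpace ℝ (Fin 3)) : ℝ := Real.sqrt (1 + ‖k‖ ^ 2)

/-- The Gross dressing form factor `B₀(k) = 1/(√(ω(k))·(|k|²+ω(k)))`. -/
def B0 (k : EuclideanSpace ℝ (Fin 3)) : ℝ := 1 / (Real.sqrt (ω k) * (‖k‖ ^ 2 + ω k))

/-- The square of the `H¹`-norm, `‖u‖_{H¹}² = ‖u‖_{L²}² + ‖∇u‖_{L²}²`. -/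
def H1sq (u : EuclideanSpace ℝ (Fin 3) → ℂ) : ℝ :=
  (∫ x, ‖u x‖ ^ 2) + ∫ x, ‖fderiv ℝ u x‖ ^ 2

/-- The `H¹`-norm of `u`. -/
def H1norm (u : EuclideanSpace ℝ (Fin 3) → ℂ) : ℝ := Real.sqrt (H1sq u)

/-- The weighted norm `‖α‖_{h_s} = (∫ ω(k)^{2s}|α(k)|² dk)^{1/2}`. -/
def hsNorm (s : ℝ) (α : EuclideanSpace ℝ (Fin 3) → ℂ) : ℝ :=
  Real.sqrt (∫ k, ω k ^ (2 * s) * ‖α k‖ ^ 2)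

/-- The `j`-th component of the dressed vector potential
`F_α(x) = 2 Re ∫ k B₀(k) e^{ik·x} α(k) dk`. -/
def Fα (α : EuclideanSpace ℝ (Fin 3) → ℂ) (j : Fin 3) (x : EuclideanSpace ℝ (Fin 3)) : ℝ :=
  2 * (∫ k, ((k j * B0 k : ℝ) : ℂ) *
    Complex.exp (Complex.I * ((inner ℝ k x : ℝ) : ℂ)) * α k).re

/-- `g_{u,α}(k) = 2 k B₀(k) · ∫ e^{−ik·x} F_α(x) |u(x)|² dx`. -/
def gualpha (u α : EuclideanSpace ℝ (Fin 3) → ℂ) (k : EuclideanSpace ℝ (Fin 3)) : ℂ :=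
  ((2 * B0 k : ℝ) : ℂ) * ∑ j : Fin 3, ((k j : ℝ) : ℂ) *
    ∫ x, Complex.exp (-(Complex.I * ((inner ℝ k x : ℝ) : ℂ))) *
      ((Fα α j x : ℝ) : ℂ) * ((‖u x‖ ^ 2 : ℝ) : ℂ)


open scoped FourierTransform SchwartzMap ContDiff in
/-- Plancherel for `L¹ ∩ L²`. -/
theorem plancherel_aux {h : EuclideanSpace ℝ (Fin 3) → ℂ} (h1 : Integrable h)
    (h2 : MemLp h 2 volume) : eLpNorm (𝓕 h) 2 volume = eLpNorm h 2 volume := by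
  have hcont : Continuous (𝓕 h) :=
    VectorFourier.fourierIntegral_continuous Real.continuous_fourierChar continuous_inner h1
  have key : ∀ᵐ x, (𝓕 (h2.toLp h) : Lp (α := EuclideanSpace ℝ (Fin 3)) ℂ 2 volume) x = 𝓕 h x := by
    apply ae_eq_of_integral_contDiff_smul_eq
    · exact (Lp.memLp _).locallyIntegrable (by norm_num)
    · exact hcont.locallyIntegrable
    · intro g g_smooth g_cpt
      have hg₁ : HasCompactSupport (Complex.ofRealCLM ∘ g) := g_cpt.comp_left rfl
      have hg₂ : ContDiff ℝ ∞ (Complex.ofRealCLM ∘ g) := by fun_prop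
      set G := hg₁.toSchwartzMap hg₂ with hG
      have e1 : ∫ x, g x • (𝓕 (h2.toLp h) : Lp (α := EuclideanSpace ℝ (Fin 3)) ℂ 2 volume) x
          = Lp.toTemperedDistribution (𝓕 (h2.toLp h)) G := by
        simp [hG]
      rw [e1, ← Lp.fourier_toTemperedDistribution_eq, TemperedDistribution.fourier_apply,
        Lp.toTemperedDistribution_apply]
      have e2 : ∫ x, (𝓕 G) x • (h2.toLp h) x = ∫ x, (𝓕 G) x • h x := by
        apply integral_congr_ae
        filter_upwards [h2.coeFn_toLp] with x hx
        rw [hx]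
      rw [e2]
      have e3 := VectorFourier.integral_fourierIntegral_smul_eq_flip
        (L := innerₗ (EuclideanSpace ℝ (Fin 3))) (μ := volume) (ν := volume)
        Real.continuous_fourierChar continuous_inner G.integrable h1
      have e4 : ∫ x, (𝓕 G) x • h x = ∫ x, G x • 𝓕 h x := by
        simpa using! e3
      rw [e4]
      simp [hG]
  rw [← eLpNorm_congr_ae key]
  have := Lp.norm_fourier_eq (h2.toLp h)
  have h3 : ENNReal.ofReal ‖(𝓕 (h2.toLp h) : Lp (α := EuclideanSpace ℝ (Fin 3)) ℂ 2 volume)‖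
    = ENNReal.ofReal ‖h2.toLp h‖ := by rw [this]
  rw [ofReal_norm, ofReal_norm, Lp.enorm_def, Lp.enorm_def] at h3
  rw [h3]
  exact eLpNorm_congr_ae h2.coeFn_toLp

/-- Fourier transform with the physics convention. -/
def FT (h : EuclideanSpace ℝ (Fin 3) → ℂ) (k : EuclideanSpace ℝ (Fin 3)) : ℂ :=
  ∫ x, Complex.exp (-(Complex.I * ((inner ℝ k x : ℝ) : ℂ))) * h x

open scoped FourierTransform in
theorem FT_eq (h : EuclideanSpace ℝ (Fin 3) → ℂ) (k : EuclideanSpace ℝ (Fin 3)) :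
    FT h k = 𝓕 h ((2 * Real.pi)⁻¹ • k) := by
  rw [Real.fourier_eq', FT]
  congr 1
  ext x
  rw [smul_eq_mul, inner_smul_right, real_inner_comm]
  congr 2
  have : (Real.pi : ℂ) ≠ 0 := by exact_mod_cast Real.pi_ne_zero
  push_cast
  field_simp

open scoped FourierTransform in
theorem FT_L2 {h : EuclideanSpace ℝ (Fin 3) → ℂ} (h1 : Integrable h)
    (h2 : MemLp h 2 volume) :
    ∫⁻ k, ‖FT h k‖ₑ ^ 2 = ENNReal.ofReal ((2 * Real.pi) ^ 3) * ∫⁻ x, ‖h x‖ₑ ^ 2 := by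
  have hP := plancherel_aux h1 h2
  have h3 : ∫⁻ k, ‖𝓕 h k‖ₑ ^ 2 = ∫⁻ x, ‖h x‖ₑ ^ 2 := by
    have := congrArg (· ^ (2:ℕ)) hP
    beta_reduce at this
    have e := fun f : EuclideanSpace ℝ (Fin 3) → ℂ => eLpNorm_nnreal_pow_eq_lintegral (μ := volume)
      (f := f) (p := 2) (by norm_num)
    have e' : ∀ f : EuclideanSpace ℝ (Fin 3) → ℂ,
      eLpNorm f 2 volume ^ 2 = ∫⁻ x, ‖f x‖ₑ ^ 2 := by
      intro f
      have := e f
      simpa using this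
    rwa [e', e'] at this
  rw [← h3]
  simp_rw [FT_eq]
  have hpi : (0:ℝ) < 2 * Real.pi := by positivity
  have hm : Measurable (fun k => ‖𝓕 h k‖ₑ ^ 2) := by
    have hcont : Continuous (𝓕 h) :=
      VectorFourier.fourierIntegral_continuous Real.continuous_fourierChar continuous_inner h1
    fun_prop
  rw [← lintegral_map (f := fun k => ‖𝓕 h k‖ₑ ^ 2) hm (measurable_const_smul (2 * Real.pi)⁻¹)]
  rw [Measure.map_addHaar_smul _ (inv_ne_zero hpi.ne'), lintegral_smul_measure]
  simp [abs_of_pos Real.pi_pos]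
  rw [← mul_inv, inv_pow, inv_inv, mul_comm Real.pi 2]

theorem line_aux (ψ ψ' γ : ℝ → ℝ) (hψ : ∀ t, HasDerivAt ψ (ψ' t) t) (h0 : ∀ t, 0 ≤ ψ t)
    (hγ : ∀ t, |ψ' t| ≤ γ t) (hm : Measurable γ) (t : ℝ) :
    ENNReal.ofReal (ψ t) ≤ ∫⁻ s, (ENNReal.ofReal (ψ s) + ENNReal.ofReal (γ s)) := by
  have hγ0 : ∀ t, 0 ≤ γ t := fun t => (abs_nonneg _).trans (hγ t)
  have hψc : Continuous ψ := continuous_iff_continuousAt.2 fun t => (hψ t).continuousAt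
  rw [lintegral_add_left (by fun_prop)]
  by_cases hI : ∫⁻ s, ENNReal.ofReal (γ s) = ⊤
  · simp [hI]
  have h_intg : Integrable γ := by
    refine ⟨hm.aestronglyMeasurable, ?_⟩
    rw [hasFiniteIntegral_iff_ofReal (Filter.Eventually.of_forall hγ0)]
    exact lt_top_iff_ne_top.2 hI
  have key : ∀ s ∈ Set.Icc t (t + 1),
      ENNReal.ofReal (ψ t) ≤ ENNReal.ofReal (ψ s) + ∫⁻ s, ENNReal.ofReal (γ s) := by
    intro s hs
    have h1 := intervalIntegral.sub_le_integral_of_hasDeriv_right_of_le (g := fun x => -ψ x)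
      (g' := fun x => -ψ' x) (φ := γ) hs.1 (by fun_prop)
      (fun x _ => (hψ x).neg.hasDerivWithinAt) h_intg.integrableOn
      (fun x _ => (neg_le_abs _).trans (hγ x))
    have h2 : ∫ y in t..s, γ y ≤ ∫ y, γ y := by
      rw [intervalIntegral.integral_of_le hs.1]
      exact setIntegral_le_integral h_intg (Filter.Eventually.of_forall hγ0)
    rw [← ofReal_integral_eq_lintegral_ofReal h_intg (Filter.Eventually.of_forall hγ0),
      ← ENNReal.ofReal_add (h0 s) (integral_nonneg hγ0)]
    apply ENNReal.ofReal_le_ofReal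
    linarith
  calc ENNReal.ofReal (ψ t) = ∫⁻ s in Set.Icc t (t+1), ENNReal.ofReal (ψ t) := by simp
    _ ≤ ∫⁻ s in Set.Icc t (t+1), (ENNReal.ofReal (ψ s) + ∫⁻ s, ENNReal.ofReal (γ s)) :=
        setLIntegral_mono' measurableSet_Icc key
    _ = (∫⁻ s in Set.Icc t (t+1), ENNReal.ofReal (ψ s)) + ∫⁻ s, ENNReal.ofReal (γ s) := by
        rw [lintegral_add_left (by fun_prop)]; simp
    _ ≤ _ := by gcongr; exact Measure.restrict_le_self

theorem curve_aux {u : EuclideanSpace ℝ (Fin 3) → ℂ} (hu : Differentiable ℝ u)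
    (c : ℝ → EuclideanSpace ℝ (Fin 3)) (v : EuclideanSpace ℝ (Fin 3)) (hv : ‖v‖ ≤ 1)
    (hc : ∀ t, HasDerivAt c v t) (t : ℝ) :
    ‖u (c t)‖ₑ ^ 2 ≤ ∫⁻ s, ‖u (c s)‖ₑ * (‖u (c s)‖ₑ + 2 * ‖fderiv ℝ u (c s)‖ₑ) := by
  have hcc : Continuous c := continuous_iff_continuousAt.2 fun t => (hc t).continuousAt
  have hd : ∀ t, HasDerivAt (fun t => u (c t)) (fderiv ℝ u (c t) v) t := fun t =>
    (hu (c t)).hasFDerivAt.comp_hasDerivAt t (hc t)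
  have h1 := line_aux (fun t => ‖u (c t)‖ ^ 2) (fun t => 2 * inner ℝ (u (c t)) (fderiv ℝ u (c t) v))
    (fun t => 2 * (‖u (c t)‖ * ‖fderiv ℝ u (c t)‖)) (fun t => (hd t).norm_sq)
    (fun t => by positivity) (fun t => by
      rw [abs_mul, abs_two]
      gcongr
      refine (abs_real_inner_le_norm _ _).trans ?_
      gcongr
      refine ((fderiv ℝ u (c t)).le_opNorm v).trans ?_
      exact mul_le_of_le_one_right (norm_nonneg _) hv) (by
      have m1 : Measurable (fun t => fderiv ℝ u (c t)) := (measurable_fderiv ℝ u).comp hcc.measurable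
      have m2 : Continuous (fun t => u (c t)) := hu.continuous.comp hcc
      exact (m2.norm.measurable.mul m1.norm).const_mul 2) t
  refine le_of_eq_of_le ?_ (h1.trans_eq ?_)
  · rw [← ofReal_norm, ENNReal.ofReal_pow (norm_nonneg _)]
  · congr 1
    ext s
    rw [ENNReal.ofReal_pow (norm_nonneg _), ENNReal.ofReal_mul (by norm_num),
      ENNReal.ofReal_mul (norm_nonneg _), ofReal_norm, ofReal_norm]
    simp only [ENNReal.ofReal_ofNat]
    ring

theorem CS_aux {X : Type*} [MeasurableSpace X] (μ : Measure X) {n m : X → ℝ≥0∞}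
    (hn : Measurable n) (hm : Measurable m) :
    (∫⁻ x, n x * m x ∂μ) ^ 2 ≤ (∫⁻ x, n x ^ 2 ∂μ) * ∫⁻ x, m x ^ 2 ∂μ := by
  have := ENNReal.lintegral_mul_le_Lp_mul_Lq μ Real.HolderConjugate.two_two hn.aemeasurable
    hm.aemeasurable
  simp only [Pi.mul_apply, ENNReal.rpow_ofNat] at this
  refine (pow_le_pow_left₀ (zero_le) this 2).trans_eq ?_
  rw [mul_pow, ← ENNReal.rpow_natCast, ← ENNReal.rpow_natCast, ← ENNReal.rpow_mul,
    ← ENNReal.rpow_mul]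
  simp

theorem lady_aux {n m : ℝ → ℝ → ℝ → ℝ≥0∞}
    (hn : Measurable (fun p : ℝ × ℝ × ℝ => n p.1 p.2.1 p.2.2))
    (hm : Measurable (fun p : ℝ × ℝ × ℝ => m p.1 p.2.1 p.2.2))
    (ha : ∀ a b c, n a b c ^ 2 ≤ ∫⁻ t, n t b c * m t b c)
    (hb : ∀ a b c, n a b c ^ 2 ≤ ∫⁻ t, n a t c * m a t c)
    (hc : ∀ a b c, n a b c ^ 2 ≤ ∫⁻ t, n a b t * m a b t) :
    ∫⁻ c, ∫⁻ b, ∫⁻ a, (n a b c ^ 2) ^ 2 ≤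
      (∫⁻ c, ∫⁻ b, ∫⁻ a, n a b c * m a b c) * ∫⁻ c, ∫⁻ b, ∫⁻ a, m a b c ^ 2 := by
  have mk : ∀ {Y : Type} [MeasurableSpace Y] (f g h : Y → ℝ), Measurable f → Measurable g →
      Measurable h → Measurable (fun y => n (f y) (g y) (h y)) := fun f g h hf hg hh =>
    hn.comp (hf.prodMk (hg.prodMk hh))
  have mk' : ∀ {Y : Type} [MeasurableSpace Y] (f g h : Y → ℝ), Measurable f → Measurable g →
      Measurable h → Measurable (fun y => m (f y) (g y) (h y)) := fun f g h hf hg hh =>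
    hm.comp (hf.prodMk (hg.prodMk hh))
  have mG : ∀ {Y : Type} [MeasurableSpace Y] (f g h : Y → ℝ), Measurable f → Measurable g →
      Measurable h → Measurable (fun y => n (f y) (g y) (h y) * m (f y) (g y) (h y)) :=
    fun f g h hf hg hh => (mk f g h hf hg hh).mul (mk' f g h hf hg hh)
  set T := ∫⁻ c, ∫⁻ b, ∫⁻ a, n a b c * m a b c with hT
  -- two-dimensional slices
  have hslice : ∀ c, ∫⁻ b, ∫⁻ a, (n a b c ^ 2) ^ 2 ≤ (∫⁻ b, ∫⁻ a, n a b c * m a b c) ^ 2 := by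
    intro c
    have e : ∫⁻ a, ∫⁻ b, n a b c * m a b c = ∫⁻ b, ∫⁻ a, n a b c * m a b c :=
      lintegral_lintegral_swap (Measurable.aemeasurable
        (mG (fun p : ℝ × ℝ => p.1) (fun p => p.2) (fun _ => c) (by fun_prop) (by fun_prop)
          (by fun_prop)))
    calc ∫⁻ b, ∫⁻ a, (n a b c ^ 2) ^ 2
        ≤ ∫⁻ b, ∫⁻ a, (∫⁻ t, n t b c * m t b c) * (∫⁻ t, n a t c * m a t c) := by
          gcongr with b a
          rw [sq (n a b c ^ 2)]
          exact mul_le_mul' (ha a b c) (hb a b c)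
      _ = ∫⁻ b, (∫⁻ t, n t b c * m t b c) * ∫⁻ a, (∫⁻ t, n a t c * m a t c) := by
          congr 1; ext b
          rw [lintegral_const_mul]
          exact Measurable.lintegral_prod_right' (f := fun p : ℝ × ℝ => n p.1 p.2 c * m p.1 p.2 c)
            (mG _ _ _ (by fun_prop) (by fun_prop) (by fun_prop))
      _ = (∫⁻ b, ∫⁻ a, n a b c * m a b c) ^ 2 := by
          rw [lintegral_mul_const, e, sq]
          exact Measurable.lintegral_prod_left' (f := fun p : ℝ × ℝ => n p.1 p.2 c * m p.1 p.2 c)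
            (mG _ _ _ (by fun_prop) (by fun_prop) (by fun_prop))
  have hS : ∀ c, ∫⁻ b, ∫⁻ a, n a b c ^ 2 ≤ T := by
    intro c
    calc ∫⁻ b, ∫⁻ a, n a b c ^ 2 ≤ ∫⁻ b, ∫⁻ a, ∫⁻ t, n a b t * m a b t := by
          gcongr with b a; exact hc a b c
      _ = ∫⁻ b, ∫⁻ t, ∫⁻ a, n a b t * m a b t := by
          congr 1; ext b
          exact lintegral_lintegral_swap (Measurable.aemeasurable
            (mG (fun p : ℝ × ℝ => p.1) (fun p => b) (fun p => p.2) (by fun_prop) (by fun_prop)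
              (by fun_prop)))
      _ = T := by
          rw [hT]
          refine lintegral_lintegral_swap (Measurable.aemeasurable ?_)
          exact Measurable.lintegral_prod_right'
            (f := fun p : (ℝ × ℝ) × ℝ => n p.2 p.1.1 p.1.2 * m p.2 p.1.1 p.1.2)
            (mG _ _ _ (by fun_prop) (by fun_prop) (by fun_prop))
  have hCS : ∀ c, (∫⁻ b, ∫⁻ a, n a b c * m a b c) ^ 2 ≤
      (∫⁻ b, ∫⁻ a, n a b c ^ 2) * ∫⁻ b, ∫⁻ a, m a b c ^ 2 := by
    intro c
    have h1 := CS_aux (volume : Measure (ℝ × ℝ)) (n := fun p => n p.2 p.1 c)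
      (m := fun p => m p.2 p.1 c) (mk _ _ _ (by fun_prop) (by fun_prop) (by fun_prop))
      (mk' _ _ _ (by fun_prop) (by fun_prop) (by fun_prop))
    rw [Measure.volume_eq_prod, lintegral_prod _ (Measurable.aemeasurable (mG _ _ _ (by fun_prop) (by fun_prop) (by fun_prop))),
      lintegral_prod _ (((mk _ _ _ (by fun_prop) (by fun_prop) (by fun_prop)).pow_const 2).aemeasurable),
      lintegral_prod _ (((mk' _ _ _ (by fun_prop) (by fun_prop) (by fun_prop)).pow_const 2).aemeasurable)] at h1
    exact h1
  have mQ : Measurable (fun c => ∫⁻ b, ∫⁻ a, m a b c ^ 2) := by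
    refine Measurable.lintegral_prod_right' (f := fun p : ℝ × ℝ => ∫⁻ a, m a p.2 p.1 ^ 2) ?_
    exact Measurable.lintegral_prod_right' (f := fun p : (ℝ × ℝ) × ℝ => m p.2 p.1.2 p.1.1 ^ 2)
      ((mk' _ _ _ (by fun_prop) (by fun_prop) (by fun_prop)).pow_const 2)
  rw [← lintegral_const_mul _ mQ]
  refine lintegral_mono fun c => (hslice c).trans ((hCS c).trans ?_)
  exact mul_le_mul' (hS c) le_rfl

/-- Coordinates on `ℝ³`. -/
def Pc (p : ℝ × ℝ × ℝ) : EuclideanSpace ℝ (Fin 3) := !₂[p.2.2, p.2.1, p.1]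

theorem Pc_mp : MeasurePreserving Pc volume volume := by
  have h1 := (volume_preserving_piFinSuccAbove (fun _ : Fin 3 => ℝ) 2).symm
  have h2 := (MeasurePreserving.id (volume : Measure ℝ)).prod (volume_preserving_finTwoArrow ℝ).symm
  have h3 := (MeasurePreserving.id (volume : Measure ℝ)).prod
    (Measure.measurePreserving_swap (μ := (volume : Measure ℝ)) (ν := (volume : Measure ℝ)))
  have h4 := (PiLp.volume_preserving_toLp (Fin 3))
  have h := h4.comp (h1.comp (h2.comp h3))
  suffices hP : Pc = (WithLp.toLp 2 ∘ ⇑(MeasurableEquiv.piFinSuccAbove (fun _ : Fin 3 => ℝ) 2).symm ∘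
        Prod.map id ⇑MeasurableEquiv.finTwoArrow.symm ∘ Prod.map id Prod.swap) by
    rw [hP]
    exact h
  funext p
  apply (WithLp.ofLp_injective 2)
  funext i
  fin_cases i <;> simp [Pc, Fin.insertNthEquiv, Fin.insertNth, Fin.succAboveCases]

theorem lintegral_Pc {f : EuclideanSpace ℝ (Fin 3) → ℝ≥0∞} (hf : Measurable f) :
    ∫⁻ x, f x = ∫⁻ c, ∫⁻ b, ∫⁻ a, f (Pc (c, b, a)) := by
  have hm : Measurable (fun p => f (Pc p)) := hf.comp Pc_mp.measurable
  rw [← Pc_mp.lintegral_comp hf, Measure.volume_eq_prod, lintegral_prod _ hm.aemeasurable]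
  congr 1
  ext c
  rw [Measure.volume_eq_prod, lintegral_prod (fun y => f (Pc (c, y)))
    (hm.comp measurable_prodMk_left).aemeasurable]

theorem lady {u : EuclideanSpace ℝ (Fin 3) → ℂ} (hu : Differentiable ℝ u) :
    ∫⁻ x, (‖u x‖ₑ ^ 2) ^ 2 ≤ (∫⁻ x, ‖u x‖ₑ * (‖u x‖ₑ + 2 * ‖fderiv ℝ u x‖ₑ)) *
      ∫⁻ x, (‖u x‖ₑ + 2 * ‖fderiv ℝ u x‖ₑ) ^ 2 := by
  have mu : Measurable u := hu.continuous.measurable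
  have md : Measurable (fderiv ℝ u) := measurable_fderiv ℝ u
  have hP : Measurable Pc := Pc_mp.measurable
  have mm : Measurable (fun x => (‖u x‖ₑ + 2 * ‖fderiv ℝ u x‖ₑ)) :=
    mu.enorm.add (md.enorm.const_mul 2)
  rw [lintegral_Pc (by fun_prop), lintegral_Pc (f := fun x => ‖u x‖ₑ * (‖u x‖ₑ + 2 * ‖fderiv ℝ u x‖ₑ)) (mu.enorm.mul mm), lintegral_Pc (mm.pow_const 2)]
  have hQ : Measurable (fun p : ℝ × ℝ × ℝ => Pc (p.2.2, p.2.1, p.1)) := hP.comp (by fun_prop)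
  have hd : ∀ i : Fin 3, ∀ x : EuclideanSpace ℝ (Fin 3), ∀ t : ℝ,
      HasDerivAt (fun t => x + t • EuclideanSpace.single i (1:ℝ)) (EuclideanSpace.single i (1:ℝ)) t := by
    intro i x t
    simpa using ((hasDerivAt_id t).smul_const (EuclideanSpace.single i (1:ℝ))).const_add x
  refine lady_aux (n := fun a b c => ‖u (Pc (c, b, a))‖ₑ)
    (m := fun a b c => ‖u (Pc (c, b, a))‖ₑ + 2 * ‖fderiv ℝ u (Pc (c, b, a))‖ₑ)
    (mu.enorm.comp hQ) (mm.comp hQ) ?_ ?_ ?_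
  · intro a b c
    refine curve_aux hu (fun t => Pc (c, b, t)) (EuclideanSpace.single 0 1) (by simp) ?_ a
    intro t
    convert hd 0 (Pc (c, b, 0)) t using 1
    ext s i
    fin_cases i <;> simp [Pc]
  · intro a b c
    refine curve_aux hu (fun t => Pc (c, t, a)) (EuclideanSpace.single 1 1) (by simp) ?_ b
    intro t
    convert hd 1 (Pc (c, 0, a)) t using 1
    ext s i
    fin_cases i <;> simp [Pc]
  · intro a b c
    refine curve_aux hu (fun t => Pc (t, b, a)) (EuclideanSpace.single 2 1) (by simp) ?_ c
    intro t
    convert hd 2 (Pc (0, b, a)) t using 1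
    ext s i
    fin_cases i <;> simp [Pc]

theorem lintegral_sq_eq {F : Type*} [NormedAddCommGroup F] {f : EuclideanSpace ℝ (Fin 3) → F}
    (hf : MemLp f 2 volume) : ∫⁻ x, ‖f x‖ₑ ^ 2 = ENNReal.ofReal (∫ x, ‖f x‖ ^ 2) := by
  rw [ofReal_integral_eq_lintegral_ofReal (hf.integrable_norm_pow (by norm_num))
    (Filter.Eventually.of_forall fun x => by positivity)]
  congr 1; ext x
  rw [ENNReal.ofReal_pow (norm_nonneg _), ofReal_norm]

theorem enn_aux (a b : ℝ) (ha : 0 ≤ a) (hb : 0 ≤ b) :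
    (ENNReal.ofReal a + 2 * ENNReal.ofReal b) ^ 2 ≤
      8 * ENNReal.ofReal a ^ 2 + 8 * ENNReal.ofReal b ^ 2 := by
  have e2 : (2 : ℝ≥0∞) = ENNReal.ofReal 2 := by simp
  have e8 : (8 : ℝ≥0∞) = ENNReal.ofReal 8 := by simp
  rw [e2, e8, ← ENNReal.ofReal_mul (by norm_num), ← ENNReal.ofReal_add ha (by positivity),
    ← ENNReal.ofReal_pow (by positivity), ← ENNReal.ofReal_pow (by positivity),
    ← ENNReal.ofReal_pow (by positivity),
    ← ENNReal.ofReal_mul (by norm_num), ← ENNReal.ofReal_mul (by norm_num),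
    ← ENNReal.ofReal_add (by positivity) (by positivity)]
  apply ENNReal.ofReal_le_ofReal
  nlinarith [sq_nonneg (a - 2 * b), sq_nonneg a]

theorem L4_bound {u : EuclideanSpace ℝ (Fin 3) → ℂ} (hu : Differentiable ℝ u)
    (h2 : MemLp u 2 volume) (h3 : MemLp (fun x => fderiv ℝ u x) 2 volume)
    (h1 : (∫ x, ‖u x‖ ^ 2) = 1) :
    1 ≤ H1norm u ∧ ∫⁻ x, (‖u x‖ₑ ^ 2) ^ 2 ≤ ENNReal.ofReal (24 * H1norm u ^ 3) := by
  have hD : 0 ≤ ∫ x, ‖fderiv ℝ u x‖ ^ 2 := integral_nonneg fun x => by positivity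
  have hH : H1norm u ^ 2 = 1 + ∫ x, ‖fderiv ℝ u x‖ ^ 2 := by
    rw [H1norm, Real.sq_sqrt (by rw [H1sq, h1]; positivity), H1sq, h1]
  have hH0 : 0 ≤ H1norm u := Real.sqrt_nonneg _
  have hH1 : 1 ≤ H1norm u := by nlinarith
  refine ⟨hH1, ?_⟩
  have mu : Measurable u := hu.continuous.measurable
  have md : Measurable (fderiv ℝ u) := measurable_fderiv ℝ u
  have mm : Measurable (fun x => (‖u x‖ₑ + 2 * ‖fderiv ℝ u x‖ₑ)) :=
    mu.enorm.add (md.enorm.const_mul 2)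
  have hQ : ∫⁻ x, (‖u x‖ₑ + 2 * ‖fderiv ℝ u x‖ₑ) ^ 2 ≤ ENNReal.ofReal (8 * H1norm u ^ 2) := by
    calc ∫⁻ x, (‖u x‖ₑ + 2 * ‖fderiv ℝ u x‖ₑ) ^ 2
        ≤ ∫⁻ x, (8 * ‖u x‖ₑ ^ 2 + 8 * ‖fderiv ℝ u x‖ₑ ^ 2) := by
          refine lintegral_mono fun x => ?_
          rw [← ofReal_norm, ← ofReal_norm]
          exact enn_aux _ _ (norm_nonneg _) (norm_nonneg _)
      _ = ENNReal.ofReal (8 * H1norm u ^ 2) := by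
          rw [lintegral_add_left (by fun_prop), lintegral_const_mul _ (by fun_prop),
            lintegral_const_mul _ (by fun_prop), lintegral_sq_eq h2, lintegral_sq_eq h3, h1, hH,
            ENNReal.ofReal_mul (by norm_num), ENNReal.ofReal_add (by norm_num) hD]
          simp [mul_add]
  have hT : ∫⁻ x, ‖u x‖ₑ * (‖u x‖ₑ + 2 * ‖fderiv ℝ u x‖ₑ) ≤ ENNReal.ofReal (3 * H1norm u) := by
    have := CS_aux volume mu.enorm mm
    rw [lintegral_sq_eq h2, h1, ENNReal.ofReal_one, one_mul] at this
    have h5 := this.trans hQ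
    have h6 : ENNReal.ofReal (8 * H1norm u ^ 2) ≤ (ENNReal.ofReal (3 * H1norm u)) ^ 2 := by
      rw [← ENNReal.ofReal_pow (by positivity)]
      apply ENNReal.ofReal_le_ofReal
      nlinarith
    exact (ENNReal.pow_le_pow_left_iff (by norm_num : (2:ℕ) ≠ 0)).1 (h5.trans h6)
  refine (lady hu).trans ((mul_le_mul' hT hQ).trans_eq ?_)
  rw [← ENNReal.ofReal_mul (by positivity)]
  congr 1; ring

theorem om_sq (k : EuclideanSpace ℝ (Fin 3)) : ω k ^ 2 = 1 + ‖k‖ ^ 2 :=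
  Real.sq_sqrt (by positivity)

theorem om_ge (k : EuclideanSpace ℝ (Fin 3)) : 1 ≤ ω k := by
  rw [ω]; exact Real.one_le_sqrt.2 (by nlinarith [sq_nonneg ‖k‖])

theorem om_cont : Continuous ω := by unfold ω; fun_prop

theorem B0_nonneg (k : EuclideanSpace ℝ (Fin 3)) : 0 ≤ B0 k := by
  have := om_ge k
  unfold B0; positivity

theorem kB0_sq (k : EuclideanSpace ℝ (Fin 3)) : (‖k‖ * B0 k) ^ 2 * ω k ^ 3 ≤ 1 := by
  have h1 := om_ge k
  have h2 := om_sq k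
  have h0 : 0 < ω k := by linarith
  have hD : ω k ^ 2 ≤ ‖k‖ ^ 2 + ω k := by linarith
  have e : (‖k‖ * B0 k) ^ 2 * ω k ^ 3 = ‖k‖ ^ 2 * ω k ^ 2 / (‖k‖ ^ 2 + ω k) ^ 2 := by
    unfold B0
    have : 0 < ‖k‖ ^ 2 + ω k := by positivity
    rw [mul_pow, div_pow, mul_pow, Real.sq_sqrt h0.le]
    field_simp
  rw [e, div_le_one (by positivity)]
  calc ‖k‖ ^ 2 * ω k ^ 2 ≤ ω k ^ 2 * ω k ^ 2 := by gcongr ?_ * _; linarith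
    _ = (ω k ^ 2) ^ 2 := by ring
    _ ≤ _ := by gcongr

theorem kB0_le_one (k : EuclideanSpace ℝ (Fin 3)) : ‖k‖ * B0 k ≤ 1 := by
  have h1 := om_ge k
  have h2 := kB0_sq k
  have h3 : 1 ≤ ω k ^ 3 := one_le_pow₀ h1
  have : (‖k‖ * B0 k) ^ 2 ≤ 1 := by nlinarith [sq_nonneg (‖k‖ * B0 k)]
  have h4 := B0_nonneg k
  exact (sq_le_one_iff₀ (by positivity)).1 this

theorem kB0_rpow (k : EuclideanSpace ℝ (Fin 3)) : ‖k‖ * B0 k ≤ ω k ^ (-(3/2) : ℝ) := by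
  have h0 : 0 < ω k := by linarith [om_ge k]
  have h4 := B0_nonneg k
  refine le_of_pow_le_pow_left₀ two_ne_zero (by positivity) ?_
  rw [← Real.rpow_natCast (ω k ^ _), ← Real.rpow_mul h0.le]
  have : (-(3/2) * ((2:ℕ):ℝ) : ℝ) = -((3:ℕ) : ℝ) := by norm_num
  rw [this, Real.rpow_neg h0.le, Real.rpow_natCast, ← one_div, le_div_iff₀ (by positivity)]
  exact kB0_sq k

theorem W_int (s : ℝ) (hs : 0 < s) : Integrable (fun k => (ω k ^ (-(3/2) - s : ℝ)) ^ 2) := by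
  have h := integrable_rpow_neg_one_add_norm_sq (E := EuclideanSpace ℝ (Fin 3)) (μ := volume)
    (r := 3 + 2 * s) (by simp; exact hs)
  convert h using 2 with k
  rw [ω, Real.sqrt_eq_rpow, ← Real.rpow_mul (by positivity), ← Real.rpow_natCast,
    ← Real.rpow_mul (by positivity)]
  congr 1
  push_cast; ring

theorem hs_sq {s : ℝ} {α : EuclideanSpace ℝ (Fin 3) → ℂ} (hα : Measurable α)
    (hfin : ∫⁻ k, ENNReal.ofReal (ω k ^ (2 * s) * ‖α k‖ ^ 2) < ⊤) :
    ∫⁻ k, ENNReal.ofReal (ω k ^ (2 * s) * ‖α k‖ ^ 2) = ENNReal.ofReal (hsNorm s α ^ 2) := by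
  have h0 : ∀ k, 0 < ω k := fun k => by linarith [om_ge k]
  have hnn : ∀ k, 0 ≤ ω k ^ (2 * s) * ‖α k‖ ^ 2 := fun k => by have := h0 k; positivity
  have mo : Measurable ω := om_cont.measurable
  have h_intg : Integrable (fun k => ω k ^ (2 * s) * ‖α k‖ ^ 2) := by
    refine ⟨Measurable.aestronglyMeasurable (by fun_prop), ?_⟩
    rwa [hasFiniteIntegral_iff_ofReal (Filter.Eventually.of_forall hnn)]
  rw [hsNorm, Real.sq_sqrt (integral_nonneg hnn),
    ofReal_integral_eq_lintegral_ofReal h_intg (Filter.Eventually.of_forall hnn)]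

theorem F_bound (s : ℝ) (hs : 0 < s) : ∃ K : ℝ, 0 ≤ K ∧
    ∀ α : EuclideanSpace ℝ (Fin 3) → ℂ, Measurable α →
      (∫⁻ k, ENNReal.ofReal (ω k ^ (2 * s) * ‖α k‖ ^ 2) < ⊤) →
      ∀ j x, |Fα α j x| ≤ K * hsNorm s α := by
  set W := ∫ k, (ω k ^ (-(3/2) - s : ℝ)) ^ 2 with hW
  have hW0 : 0 ≤ W := integral_nonneg fun k => by positivity
  refine ⟨2 * √W, by positivity, fun α hα hfin j x => ?_⟩
  have h0 : ∀ k, 0 < ω k := fun k => by linarith [om_ge k]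
  have mo : Measurable ω := om_cont.measurable
  set I := ∫ k, ((k j * B0 k : ℝ) : ℂ) *
    Complex.exp (Complex.I * ((inner ℝ k x : ℝ) : ℂ)) * α k with hI
  have hpt : ∀ k, ‖((k j * B0 k : ℝ) : ℂ) *
      Complex.exp (Complex.I * ((inner ℝ k x : ℝ) : ℂ)) * α k‖ₑ ≤
      ENNReal.ofReal (ω k ^ (-(3/2) - s : ℝ)) * ENNReal.ofReal (ω k ^ s * ‖α k‖) := by
    intro k
    have hk := h0 k
    rw [← ENNReal.ofReal_mul (by positivity), ← ofReal_norm]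
    apply ENNReal.ofReal_le_ofReal
    rw [norm_mul, norm_mul, Complex.norm_real, mul_comm Complex.I, Complex.norm_exp_ofReal_mul_I,
      mul_one, ← mul_assoc, ← Real.rpow_add hk, sub_add_cancel]
    gcongr
    refine le_trans ?_ (kB0_rpow k)
    rw [norm_mul, Real.norm_of_nonneg (B0_nonneg k)]
    exact mul_le_mul_of_nonneg_right (PiLp.norm_apply_le k j) (B0_nonneg k)
  have h1 : ‖I‖ₑ ≤ ∫⁻ k, ENNReal.ofReal (ω k ^ (-(3/2) - s : ℝ)) *
      ENNReal.ofReal (ω k ^ s * ‖α k‖) :=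
    (enorm_integral_le_lintegral_enorm _).trans (lintegral_mono hpt)
  have h2 := CS_aux (volume : Measure (EuclideanSpace ℝ (Fin 3)))
    (n := fun k => ENNReal.ofReal (ω k ^ (-(3/2) - s : ℝ)))
    (m := fun k => ENNReal.ofReal (ω k ^ s * ‖α k‖)) (by fun_prop) (by fun_prop)
  have e1 : ∫⁻ k, ENNReal.ofReal (ω k ^ (-(3/2) - s : ℝ)) ^ 2 = ENNReal.ofReal W := by
    rw [hW, ofReal_integral_eq_lintegral_ofReal (W_int s hs)
      (Filter.Eventually.of_forall fun k => by positivity)]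
    congr 1; ext k
    rw [ENNReal.ofReal_pow (Real.rpow_nonneg (h0 k).le _)]
  have e2 : ∫⁻ k, ENNReal.ofReal (ω k ^ s * ‖α k‖) ^ 2 = ENNReal.ofReal (hsNorm s α ^ 2) := by
    rw [← hs_sq hα hfin]
    congr 1; ext k
    have hk := h0 k
    rw [← ENNReal.ofReal_pow (by positivity), mul_pow, ← Real.rpow_natCast (ω k ^ s),
      ← Real.rpow_mul hk.le]
    congr 3
    push_cast; ring
  rw [e1, e2] at h2
  have h3 : ‖I‖ₑ ^ 2 ≤ ENNReal.ofReal W * ENNReal.ofReal (hsNorm s α ^ 2) :=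
    (pow_le_pow_left₀ zero_le h1 2).trans h2
  rw [← ofReal_norm, ← ENNReal.ofReal_pow (norm_nonneg _), ← ENNReal.ofReal_mul hW0,
    ENNReal.ofReal_le_ofReal_iff (by positivity)] at h3
  have hh : 0 ≤ hsNorm s α := Real.sqrt_nonneg _
  have h4 : ‖I‖ ≤ √W * hsNorm s α := by
    refine le_of_pow_le_pow_left₀ two_ne_zero (by positivity) ?_
    rwa [mul_pow, Real.sq_sqrt hW0]
  have h5 := Complex.abs_re_le_norm I
  have e : Fα α j x = 2 * I.re := rfl
  rw [e, abs_mul, abs_two]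
  linarith

theorem F_meas {α : EuclideanSpace ℝ (Fin 3) → ℂ} (hα : Measurable α) (j : Fin 3) :
    Measurable (Fα α j) := by
  have mB : Measurable B0 := by
    have mo : Measurable ω := om_cont.measurable
    unfold B0; fun_prop
  have : StronglyMeasurable (fun x : EuclideanSpace ℝ (Fin 3) => ∫ k, ((k j * B0 k : ℝ) : ℂ) *
    Complex.exp (Complex.I * ((inner ℝ k x : ℝ) : ℂ)) * α k) := by
    refine StronglyMeasurable.integral_prod_right'
      (f := fun p : EuclideanSpace ℝ (Fin 3) × EuclideanSpace ℝ (Fin 3) =>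
        ((p.2 j * B0 p.2 : ℝ) : ℂ) *
        Complex.exp (Complex.I * ((inner ℝ p.2 p.1 : ℝ) : ℂ)) * α p.2) ?_
    apply Measurable.stronglyMeasurable
    have hB : Measurable (fun p : EuclideanSpace ℝ (Fin 3) × EuclideanSpace ℝ (Fin 3) =>
      B0 p.2) := mB.comp measurable_snd
    have hA : Measurable (fun p : EuclideanSpace ℝ (Fin 3) × EuclideanSpace ℝ (Fin 3) =>
      α p.2) := hα.comp measurable_snd
    fun_prop
  exact (Complex.measurable_re.comp this.measurable).const_mul 2

/-- The weighted bound for one component. -/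
theorem FT_weighted {u : EuclideanSpace ℝ (Fin 3) → ℂ} (hu : Differentiable ℝ u)
    (h2 : MemLp u 2 volume) (h3 : MemLp (fun x => fderiv ℝ u x) 2 volume)
    (h1 : (∫ x, ‖u x‖ ^ 2) = 1) {F : EuclideanSpace ℝ (Fin 3) → ℝ} (mF : Measurable F) {M : ℝ}
    (hM : ∀ x, |F x| ≤ M) :
    (∀ k, ‖FT (fun x => ((F x : ℝ) : ℂ) * ((‖u x‖ ^ 2 : ℝ) : ℂ)) k‖ ≤ M) ∧
    Measurable (FT (fun x => ((F x : ℝ) : ℂ) * ((‖u x‖ ^ 2 : ℝ) : ℂ))) ∧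
    ∫⁻ k, ENNReal.ofReal ((ω k ^ 2)⁻¹) *
      ‖FT (fun x => ((F x : ℝ) : ℂ) * ((‖u x‖ ^ 2 : ℝ) : ℂ)) k‖ₑ ^ 2 ≤
      ENNReal.ofReal ((volume.real (Metric.ball (0 : EuclideanSpace ℝ (Fin 3)) 1) +
        (2 * Real.pi) ^ 3 * 24) * M ^ 2 * H1norm u ^ 2) := by
  obtain ⟨hH, hL4⟩ := L4_bound hu h2 h3 h1
  have hM0 : 0 ≤ M := (abs_nonneg _).trans (hM 0)
  have mu : Measurable u := hu.continuous.measurable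
  have hui : Integrable (fun x => ‖u x‖ ^ 2) := h2.integrable_norm_pow (by norm_num)
  set h : EuclideanSpace ℝ (Fin 3) → ℂ := fun x => ((F x : ℝ) : ℂ) * ((‖u x‖ ^ 2 : ℝ) : ℂ) with hh
  have mh : Measurable h := by fun_prop
  have hb : ∀ x, ‖h x‖ ≤ M * ‖u x‖ ^ 2 := by
    intro x
    rw [hh, norm_mul, Complex.norm_real, Complex.norm_real, Real.norm_eq_abs,
      Real.norm_of_nonneg (by positivity)]
    exact mul_le_mul_of_nonneg_right (hM x) (by positivity)
  have hi : Integrable h := (hui.const_mul M).mono' mh.aestronglyMeasurable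
    (Filter.Eventually.of_forall hb)
  have hsup : ∀ k, ‖FT h k‖ ≤ M := by
    intro k
    calc ‖FT h k‖ ≤ ∫ x, M * ‖u x‖ ^ 2 := by
          refine norm_integral_le_of_norm_le (hui.const_mul M) (Filter.Eventually.of_forall ?_)
          intro x
          have : -(Complex.I * ((inner ℝ k x : ℝ) : ℂ)) = ((-(inner ℝ k x) : ℝ) : ℂ) * Complex.I := by
            push_cast; ring
          rw [norm_mul, this, Complex.norm_exp_ofReal_mul_I, one_mul]
          exact hb x
      _ = M := by rw [integral_const_mul, h1, mul_one]
  have hL2 : ∫⁻ x, ‖h x‖ₑ ^ 2 ≤ ENNReal.ofReal (M ^ 2 * (24 * H1norm u ^ 3)) := by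
    calc ∫⁻ x, ‖h x‖ₑ ^ 2 ≤ ∫⁻ x, ENNReal.ofReal (M ^ 2) * (‖u x‖ₑ ^ 2) ^ 2 := by
          refine lintegral_mono fun x => ?_
          rw [← ofReal_norm, ← ofReal_norm, ← ENNReal.ofReal_pow (norm_nonneg _),
            ← ENNReal.ofReal_pow (norm_nonneg _), ← ENNReal.ofReal_pow (by positivity),
            ← ENNReal.ofReal_mul (by positivity), ← mul_pow]
          exact ENNReal.ofReal_le_ofReal (pow_le_pow_left₀ (norm_nonneg _) (hb x) 2)
      _ ≤ _ := by
          rw [lintegral_const_mul _ (by fun_prop), ENNReal.ofReal_mul (by positivity)]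
          gcongr
  have hmem : MemLp h 2 volume := by
    refine ⟨mh.aestronglyMeasurable, ?_⟩
    rw [eLpNorm_lt_top_iff_lintegral_rpow_enorm_lt_top (by norm_num) (by norm_num)]
    simp only [ENNReal.toReal_ofNat, ENNReal.rpow_ofNat]
    exact hL2.trans_lt ENNReal.ofReal_lt_top
  have hcont : Continuous (FT h) := by
    have : FT h = fun k => FourierTransform.fourier h ((2 * Real.pi)⁻¹ • k) := by
      funext k; exact FT_eq h k
    rw [this]
    have hc : Continuous (FourierTransform.fourier h : EuclideanSpace ℝ (Fin 3) → ℂ) :=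
      VectorFourier.fourierIntegral_continuous Real.continuous_fourierChar continuous_inner hi
    exact hc.comp (continuous_const_smul _)
  refine ⟨hsup, hcont.measurable, ?_⟩
  set H := H1norm u with hHdef
  have hR0 : 0 ≤ √H := Real.sqrt_nonneg _
  have hR1 : 1 ≤ √H := Real.one_le_sqrt.2 hH
  have hRsq : √H ^ 2 = H := Real.sq_sqrt (by linarith)
  calc ∫⁻ k, ENNReal.ofReal ((ω k ^ 2)⁻¹) * ‖FT h k‖ₑ ^ 2
      ≤ ∫⁻ k, ((Metric.ball (0 : EuclideanSpace ℝ (Fin 3)) (√H)).indicator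
          (fun _ => ENNReal.ofReal (M ^ 2)) k + ENNReal.ofReal (H⁻¹) * ‖FT h k‖ₑ ^ 2) := by
        refine lintegral_mono fun k => ?_
        by_cases hk : k ∈ Metric.ball (0 : EuclideanSpace ℝ (Fin 3)) (√H)
        · rw [Set.indicator_of_mem hk]
          refine le_add_right ?_
          rw [← ofReal_norm, ← ENNReal.ofReal_pow (norm_nonneg _),
            ← ENNReal.ofReal_mul (by positivity)]
          apply ENNReal.ofReal_le_ofReal
          have a1 : (ω k ^ 2)⁻¹ ≤ 1 := inv_le_one_of_one_le₀ (one_le_pow₀ (om_ge k))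
          have a2 : ‖FT h k‖ ^ 2 ≤ M ^ 2 := pow_le_pow_left₀ (norm_nonneg _) (hsup k) 2
          calc _ ≤ 1 * M ^ 2 := by gcongr
            _ = _ := one_mul _
        · rw [Set.indicator_of_notMem hk, zero_add]
          gcongr
          rw [om_sq]
          have : √H ≤ ‖k‖ := by simpa using hk
          have : √H ^ 2 ≤ ‖k‖ ^ 2 := by gcongr
          linarith
    _ = ENNReal.ofReal (M ^ 2) * volume (Metric.ball (0 : EuclideanSpace ℝ (Fin 3)) (√H)) +
        ENNReal.ofReal (H⁻¹) * (ENNReal.ofReal ((2 * Real.pi) ^ 3) * ∫⁻ x, ‖h x‖ₑ ^ 2) := by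
        rw [lintegral_add_left (measurable_const.indicator Metric.isOpen_ball.measurableSet),
          lintegral_indicator_const Metric.isOpen_ball.measurableSet,
          lintegral_const_mul _ (by have := hcont.measurable; fun_prop), FT_L2 hi hmem]
    _ ≤ ENNReal.ofReal (M ^ 2) * (ENNReal.ofReal (√H ^ 3) *
          ENNReal.ofReal (volume.real (Metric.ball (0 : EuclideanSpace ℝ (Fin 3)) 1))) +
        ENNReal.ofReal (H⁻¹) * (ENNReal.ofReal ((2 * Real.pi) ^ 3) *
          ENNReal.ofReal (M ^ 2 * (24 * H ^ 3))) := by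
        gcongr
        rw [Measure.addHaar_ball _ _ hR0, ofReal_measureReal]
        simp
    _ ≤ _ := by
        rw [← ENNReal.ofReal_mul (by positivity), ← ENNReal.ofReal_mul (by positivity),
          ← ENNReal.ofReal_mul (by positivity), ← ENNReal.ofReal_mul (by positivity),
          ← ENNReal.ofReal_add (by positivity) (by positivity)]
        apply ENNReal.ofReal_le_ofReal
        have b1 : √H ^ 3 ≤ H ^ 2 := by
          rw [← hRsq, ← pow_mul, Real.sqrt_sq hR0]
          exact pow_le_pow_right₀ hR1 (by norm_num)
        have b2 : H⁻¹ * ((2 * Real.pi) ^ 3 * (M ^ 2 * (24 * H ^ 3))) =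
            (2 * Real.pi) ^ 3 * 24 * M ^ 2 * H ^ 2 := by
          have : H ≠ 0 := by linarith
          field_simp
        rw [b2]
        have b3 : M ^ 2 * (√H ^ 3 * volume.real (Metric.ball (0 : EuclideanSpace ℝ (Fin 3)) 1)) ≤
            M ^ 2 * (H ^ 2 * volume.real (Metric.ball (0 : EuclideanSpace ℝ (Fin 3)) 1)) := by
          gcongr
        linarith

theorem g_pointwise (u α : EuclideanSpace ℝ (Fin 3) → ℂ) (k : EuclideanSpace ℝ (Fin 3)) :
    ‖gualpha u α k‖ ≤ 2 * (‖k‖ * B0 k) *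
      ∑ j : Fin 3, ‖FT (fun x => ((Fα α j x : ℝ) : ℂ) * ((‖u x‖ ^ 2 : ℝ) : ℂ)) k‖ := by
  have e : gualpha u α k = ((2 * B0 k : ℝ) : ℂ) * ∑ j : Fin 3, ((k j : ℝ) : ℂ) *
      FT (fun x => ((Fα α j x : ℝ) : ℂ) * ((‖u x‖ ^ 2 : ℝ) : ℂ)) k := by
    simp only [gualpha, FT, mul_assoc]
  have hB := B0_nonneg k
  rw [e, norm_mul, Complex.norm_real, Real.norm_of_nonneg (by positivity)]
  calc _ ≤ 2 * B0 k * ∑ j : Fin 3, ‖k‖ *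
        ‖FT (fun x => ((Fα α j x : ℝ) : ℂ) * ((‖u x‖ ^ 2 : ℝ) : ℂ)) k‖ := by
        gcongr
        refine norm_sum_le_of_le _ fun j _ => ?_
        rw [norm_mul, Complex.norm_real]
        exact mul_le_mul_of_nonneg_right (PiLp.norm_apply_le k j) (norm_nonneg _)
    _ = _ := by rw [← Finset.mul_sum]; ring

/-- For every `s > 0` there is `C > 0` such that for differentiable `u` with `∇u ∈ L²`,
`‖u‖_{L²} = 1`, and `α` with `∫ ω^{2s}|α|² < ∞`:
`sup_k |g_{u,α}(k)| ≤ C‖u‖_{H¹}‖α‖_{h_s}` and `∫ ω|g_{u,α}|² ≤ C‖u‖_{H¹}²‖α‖_{h_s}²`. -/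
theorem gualpha_bounds (s : ℝ) (hs : 0 < s) :
    ∃ C > 0, ∀ (u α : EuclideanSpace ℝ (Fin 3) → ℂ),
      Differentiable ℝ u → MemLp u 2 volume →
      MemLp (fun x => fderiv ℝ u x) 2 volume →
      (∫ x, ‖u x‖ ^ 2) = 1 →
      Measurable α →
      (∫⁻ k, ENNReal.ofReal (ω k ^ (2 * s) * ‖α k‖ ^ 2) < ⊤) →
      (∀ k, ‖gualpha u α k‖ ≤ C * H1norm u * hsNorm s α) ∧
      ∫⁻ k, ENNReal.ofReal (ω k * ‖gualpha u α k‖ ^ 2) ≤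
        ENNReal.ofReal (C * H1norm u ^ 2 * hsNorm s α ^ 2) := by


  obtain ⟨K, hK, hF⟩ := F_bound s hs
  set C1 := volume.real (Metric.ball (0 : EuclideanSpace ℝ (Fin 3)) 1) +
        (2 * Real.pi) ^ 3 * 24 with hC1
  have hC1p : 0 ≤ C1 := by positivity
  refine ⟨6 * K + 36 * C1 * K ^ 2 + 1, by positivity, ?_⟩
  intro u α hu h2 h3 h1 hα hfin
  have hFb := hF α hα hfin
  have hn : 0 ≤ hsNorm s α := Real.sqrt_nonneg _
  have hH := (L4_bound hu h2 h3 h1).1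
  have hW := fun j => FT_weighted hu h2 h3 h1 (F_meas hα j) (hFb j)
  set f : Fin 3 → EuclideanSpace ℝ (Fin 3) → ℂ := fun j =>
    FT (fun x => ((Fα α j x : ℝ) : ℂ) * ((‖u x‖ ^ 2 : ℝ) : ℂ)) with hf
  have hg : ∀ k, ‖gualpha u α k‖ ≤ 2 * (‖k‖ * B0 k) * ∑ j : Fin 3, ‖f j k‖ :=
    g_pointwise u α
  constructor
  · intro k
    have hB := B0_nonneg k
    calc ‖gualpha u α k‖ ≤ 2 * (‖k‖ * B0 k) * ∑ j : Fin 3, ‖f j k‖ := hg k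
      _ ≤ 2 * 1 * ∑ j : Fin 3, (K * hsNorm s α) := by
          gcongr with j
          · exact kB0_le_one k
          · exact (hW j).1 k
      _ = 6 * K * 1 * hsNorm s α := by simp; ring
      _ ≤ (6 * K + 36 * C1 * K ^ 2 + 1) * H1norm u * hsNorm s α := by
          gcongr
          have : 0 ≤ 36 * C1 * K ^ 2 := by positivity
          linarith
  · have hpt : ∀ k, ENNReal.ofReal (ω k * ‖gualpha u α k‖ ^ 2) ≤
        12 * ∑ j : Fin 3, ENNReal.ofReal ((ω k ^ 2)⁻¹) * ‖f j k‖ₑ ^ 2 := by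
      intro k
      have ho : 0 < ω k := by linarith [om_ge k]
      have hB := B0_nonneg k
      have e12 : (12 : ℝ≥0∞) = ENNReal.ofReal 12 := by simp
      have e : (12 : ℝ≥0∞) * ∑ j : Fin 3, ENNReal.ofReal ((ω k ^ 2)⁻¹) * ‖f j k‖ₑ ^ 2 =
          ENNReal.ofReal (12 * ∑ j : Fin 3, (ω k ^ 2)⁻¹ * ‖f j k‖ ^ 2) := by
        rw [ENNReal.ofReal_mul (by norm_num), ENNReal.ofReal_sum_of_nonneg
          (fun j _ => by positivity), e12]
        congr 2; ext j
        rw [ENNReal.ofReal_mul (by positivity), ENNReal.ofReal_pow (norm_nonneg _), ofReal_norm]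
      rw [e]
      apply ENNReal.ofReal_le_ofReal
      have a1 : (∑ j : Fin 3, ‖f j k‖) ^ 2 ≤ 3 * ∑ j : Fin 3, ‖f j k‖ ^ 2 := by
        simpa using sq_sum_le_card_mul_sum_sq (s := (Finset.univ : Finset (Fin 3)))
          (f := fun j => ‖f j k‖)
      have a2 : ω k * (‖k‖ * B0 k) ^ 2 ≤ (ω k ^ 2)⁻¹ := by
        rw [← one_div, le_div_iff₀ (by positivity)]
        have := kB0_sq k
        linarith
      calc ω k * ‖gualpha u α k‖ ^ 2
          ≤ ω k * (2 * (‖k‖ * B0 k) * ∑ j : Fin 3, ‖f j k‖) ^ 2 := by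
            gcongr; exact hg k
        _ = 4 * (ω k * (‖k‖ * B0 k) ^ 2) * (∑ j : Fin 3, ‖f j k‖) ^ 2 := by ring
        _ ≤ 4 * (ω k ^ 2)⁻¹ * (3 * ∑ j : Fin 3, ‖f j k‖ ^ 2) := by gcongr
        _ = _ := by rw [← Finset.mul_sum]; ring
    have mo : Measurable ω := om_cont.measurable
    have mf : ∀ j, Measurable (f j) := fun j => (hW j).2.1
    have mt : ∀ j, Measurable (fun k => ENNReal.ofReal ((ω k ^ 2)⁻¹) * ‖f j k‖ₑ ^ 2) := by
      intro j
      have := mf j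
      fun_prop
    calc ∫⁻ k, ENNReal.ofReal (ω k * ‖gualpha u α k‖ ^ 2)
        ≤ ∫⁻ k, 12 * ∑ j : Fin 3, ENNReal.ofReal ((ω k ^ 2)⁻¹) * ‖f j k‖ₑ ^ 2 :=
          lintegral_mono hpt
      _ = 12 * ∑ j : Fin 3, ∫⁻ k, ENNReal.ofReal ((ω k ^ 2)⁻¹) * ‖f j k‖ₑ ^ 2 := by
          rw [lintegral_const_mul _ (Finset.measurable_sum _ fun j _ => mt j),
            lintegral_finsetSum _ fun j _ => mt j]
      _ ≤ 12 * ∑ j : Fin 3, ENNReal.ofReal (C1 * (K * hsNorm s α) ^ 2 * H1norm u ^ 2) := by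
          gcongr with j
          exact (hW j).2.2
      _ = ENNReal.ofReal (36 * C1 * K ^ 2 * H1norm u ^ 2 * hsNorm s α ^ 2) := by
          have e36 : (12 : ℝ≥0∞) * 3 = ENNReal.ofReal 36 := by
            rw [ENNReal.ofReal_ofNat]; norm_num
          rw [Finset.sum_const, Finset.card_univ, Fintype.card_fin, nsmul_eq_mul, ← mul_assoc]
          push_cast
          rw [e36, ← ENNReal.ofReal_mul (by norm_num)]
          congr 1; ring
      _ ≤ _ := by
          apply ENNReal.ofReal_le_ofReal
          gcongr
          linarith

end
end

section
/- There exists C > 0 such that for every p ∈ ℝ³: ∫_{ℝ³} (ω(k)·(|k|²+ω(k)))^{−1} · (1+|p−k|²)^{−1/2} dk ≤ C; i.e., sup_{p∈ℝ³} ∫ G₀(k)B₀(k)(1+|p−k|²)^{−1/2} dk < ∞ where G₀(k) = ω(k)^{−1/2}. -/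
open MeasureTheory
open scoped ENNReal

noncomputable section

lemma aux_bound (a b : ℝ) (ha : 1 ≤ a) (hb : 1 ≤ b) :
    a ^ (-(3 : ℝ) / 2) * b ^ (-(1 : ℝ) / 2) ≤ a ^ (-(4 : ℝ) / 2) + b ^ (-(4 : ℝ) / 2) := by
  have ha0 : 0 < a := by linarith
  have hb0 : 0 < b := by linarith
  rcases le_total a b with h | h
  · have h1 : b ^ (-(1 : ℝ) / 2) ≤ a ^ (-(1 : ℝ) / 2) :=
      Real.rpow_le_rpow_of_nonpos ha0 h (by norm_num)
    calc a ^ (-(3 : ℝ) / 2) * b ^ (-(1 : ℝ) / 2)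
        ≤ a ^ (-(3 : ℝ) / 2) * a ^ (-(1 : ℝ) / 2) := by gcongr
      _ = a ^ (-(4 : ℝ) / 2) := by rw [← Real.rpow_add ha0]; norm_num
      _ ≤ _ := le_add_of_nonneg_right (by positivity)
  · have h1 : a ^ (-(3 : ℝ) / 2) ≤ b ^ (-(3 : ℝ) / 2) :=
      Real.rpow_le_rpow_of_nonpos hb0 h (by norm_num)
    calc a ^ (-(3 : ℝ) / 2) * b ^ (-(1 : ℝ) / 2)
        ≤ b ^ (-(3 : ℝ) / 2) * b ^ (-(1 : ℝ) / 2) := by gcongr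
      _ = b ^ (-(4 : ℝ) / 2) := by rw [← Real.rpow_add hb0]; norm_num
      _ ≤ _ := le_add_of_nonneg_left (by positivity)

lemma aux_omega (k : EuclideanSpace ℝ (Fin 3)) :
    (ω k * (‖k‖ ^ 2 + ω k))⁻¹ ≤ (1 + ‖k‖ ^ 2) ^ (-(3 : ℝ) / 2) := by
  have ha : (1 : ℝ) ≤ 1 + ‖k‖ ^ 2 := by nlinarith [sq_nonneg ‖k‖]
  have ha0 : 0 < 1 + ‖k‖ ^ 2 := by linarith
  have h1 : 1 ≤ ω k := Real.one_le_sqrt.2 ha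
  have h2 : (1 + ‖k‖ ^ 2) ^ (-(3 : ℝ) / 2) = (ω k * (1 + ‖k‖ ^ 2))⁻¹ := by
    rw [neg_div, Real.rpow_neg ha0.le, ω, Real.sqrt_eq_rpow]
    congr 1
    nth_rewrite 3 [← Real.rpow_one (1 + ‖k‖ ^ 2)]
    rw [← Real.rpow_add ha0]
    norm_num
  rw [h2]
  apply inv_anti₀ (by positivity)
  apply mul_le_mul_of_nonneg_left _ (by linarith)
  linarith

/-- There is `C > 0` such that for every `p ∈ ℝ³`,
`∫ (ω(k)·(|k|²+ω(k)))^{−1}·(1+|p−k|²)^{−1/2} dk ≤ C`; i.e.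
`sup_p ∫ G₀(k)B₀(k)(1+|p−k|²)^{−1/2} dk < ∞` with `G₀(k) = ω(k)^{−1/2}`. -/
theorem G0B0_convolution_bound :
    ∃ C > 0, ∀ p : EuclideanSpace ℝ (Fin 3),
      ∫⁻ k, ENNReal.ofReal
          ((ω k * (‖k‖ ^ 2 + ω k))⁻¹ * (1 + ‖p - k‖ ^ 2) ^ (-(1 : ℝ) / 2)) ≤
        ENNReal.ofReal C := by
  let f : EuclideanSpace ℝ (Fin 3) → ℝ≥0∞ :=
    fun k => ENNReal.ofReal ((1 + ‖k‖ ^ 2) ^ (-(4 : ℝ) / 2))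
  have hf : Measurable f := by
    unfold f; fun_prop
  have hfin : ∫⁻ k, f k < ⊤ :=
    (integrable_rpow_neg_one_add_norm_sq (E := EuclideanSpace ℝ (Fin 3))
      (μ := volume) (r := 4) (by simp; norm_num)).lintegral_lt_top
  refine ⟨2 * (∫⁻ k, f k).toReal + 1, by positivity, fun p => ?_⟩
  calc _ ≤ ∫⁻ k, (f k + f (p - k)) := by
        apply lintegral_mono
        intro k
        simp only [f]
        rw [← ENNReal.ofReal_add (by positivity) (by positivity)]
        apply ENNReal.ofReal_le_ofReal
        refine le_trans ?_ (aux_bound _ _ (by nlinarith [sq_nonneg ‖k‖])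
          (by nlinarith [sq_nonneg ‖p - k‖]))
        exact mul_le_mul_of_nonneg_right (aux_omega k) (by positivity)
    _ = (∫⁻ k, f k) + (∫⁻ k, f k) := by
        rw [lintegral_add_left hf, lintegral_sub_left_eq_self f p]
    _ = ENNReal.ofReal (2 * (∫⁻ k, f k).toReal) := by
        rw [two_mul, ENNReal.ofReal_add (by positivity) (by positivity),
          ENNReal.ofReal_toReal hfin.ne]
    _ ≤ _ := ENNReal.ofReal_le_ofReal (by linarith)

end
end
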